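/- Let x₀ ∈ (0,1) and R ∈ (0,1] satisfy (x₀ − 4R, x₀ + 4R) ⊆ (0,1), and let G ⊆ (x₀ − R, x₀ + R) be a Lebesgue measurable set with |G| > 0. Then there exists a constant C > 0 such that for every λ > 0 and every finitely supported sequence (a_j)_{j≥1} of real numbers, the function f(x) := Σ_{j ≥ 1, j⁴π⁴ ≤ λ} a_j sin(jπx) satisfies ( ∫_0^1 f(x)² dx )^{1/2} ≤ C e^{C λ^{1/4}} ∫_G |f(x)| dx. -/

import Mathlib

open MeasureTheory Real

lemma sep_points (h : ℝ) (hh : 0 < h) (n : ℕ) : ∀ F : Set ℝ, BddBelow F →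
    ENNReal.ofReal (n * (2 * h)) < volume F →
    ∃ x : ℕ → ℝ, (∀ i ≤ n, x i ∈ F) ∧ ∀ i < n, x i + h ≤ x (i + 1) := by
  induction n with
  | zero =>
    intro F hb hF
    have hne : F.Nonempty := by
      by_contra hc
      rw [Set.not_nonempty_iff_eq_empty] at hc
      simp [hc] at hF
    obtain ⟨y, hy⟩ := hne
    exact ⟨fun _ => y, fun _ _ => hy, fun i hi => absurd hi (by omega)⟩
  | succ n ih =>
    intro F hb hF
    have hne : F.Nonempty := by
      by_contra hc
      rw [Set.not_nonempty_iff_eq_empty] at hc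
      simp [hc] at hF
    obtain ⟨y, hy, hylt⟩ := exists_lt_of_csInf_lt hne (show sInf F < sInf F + h by linarith)
    have hsub : F ⊆ (F ∩ Set.Ici (y + h)) ∪ Set.Ico (sInf F) (sInf F + 2 * h) := by
      intro z hz
      by_cases hzy : y + h ≤ z
      · exact Or.inl ⟨hz, hzy⟩
      · exact Or.inr ⟨csInf_le hb hz, by push Not at hzy; linarith⟩
    have hm : volume F ≤ volume (F ∩ Set.Ici (y + h)) + ENNReal.ofReal (2 * h) := by
      refine (measure_mono hsub).trans ((measure_union_le _ _).trans ?_)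
      rw [Real.volume_Ico]
      simp
    have hF' : ENNReal.ofReal (n * (2 * h)) < volume (F ∩ Set.Ici (y + h)) := by
      have h1 := hF.trans_le hm
      have h2 : ((n + 1 : ℕ) : ℝ) * (2 * h) = n * (2 * h) + 2 * h := by push_cast; ring
      rw [h2, ENNReal.ofReal_add (by positivity) (by positivity)] at h1
      exact lt_of_add_lt_add_right h1
    obtain ⟨x, hx1, hx2⟩ := ih _ (hb.mono Set.inter_subset_left) hF'
    refine ⟨fun i => Nat.casesOn i y x, ?_, ?_⟩
    · intro i hi
      cases i with
      | zero => exact hy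
      | succ i => exact (hx1 i (by omega)).1
    · intro i hi
      cases i with
      | zero => exact (hx1 0 (by omega)).2
      | succ i => exact hx2 i (by omega)

lemma sep_points' (h : ℝ) (n : ℕ) (x : ℕ → ℝ)
    (hx : ∀ i < n, x i + h ≤ x (i + 1)) : ∀ m i, i + m ≤ n → h * m ≤ x (i + m) - x i := by
  intro m
  induction m with
  | zero => intro i _; simp
  | succ m ih =>
    intro i hi
    have h1 := ih i (by omega)
    have h2 := hx (i + m) (by omega)
    rw [← add_assoc]
    push_cast
    linarith

lemma prod_abs_sub (i m : ℕ) :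
    ∏ k ∈ (Finset.range (i + m + 1)).erase i, |(i:ℝ) - k| = (i.factorial : ℝ) * m.factorial := by
  induction m with
  | zero =>
    have : (Finset.range (i + 0 + 1)).erase i = Finset.range i := by
      ext k; simp; omega
    rw [this, ← Finset.prod_range_reflect, ← Finset.prod_range_add_one_eq_factorial]
    push_cast
    simp only [Nat.factorial_zero, Nat.cast_one, mul_one]
    refine Finset.prod_congr rfl fun k hk => ?_
    have hk := Finset.mem_range.1 hk
    have : ((i - 1 - k : ℕ) : ℝ) = i - 1 - k := by
      rw [Nat.sub_sub, Nat.cast_sub (by omega)]; push_cast; ring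
    rw [this]
    rw [abs_of_nonneg (by linarith [(Nat.cast_nonneg k : (0:ℝ) ≤ k)])]
    ring
  | succ m ih =>
    have : (Finset.range (i + (m + 1) + 1)).erase i
        = insert (i + m + 1) ((Finset.range (i + m + 1)).erase i) := by
      ext k; simp; omega
    rw [this, Finset.prod_insert (by simp), ih, Nat.factorial_succ]
    push_cast
    have : |(i:ℝ) - (i + m + 1)| = m + 1 := by
      rw [abs_sub_comm, abs_of_nonneg] <;> ring_nf; positivity
    rw [this]; ring

lemma remez_aux (n : ℕ) (P : Polynomial ℝ) (hP : P.degree < ((n + 1 : ℕ) : WithBot ℕ))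
    (y : ℕ → ℝ) (d M : ℝ) (hd : 0 < d) (hy1 : ∀ i ≤ n, |y i| ≤ 1)
    (hsep : ∀ i ≤ n, ∀ k ≤ n, d * |(i:ℝ) - k| ≤ |y i - y k|)
    (hM : ∀ i ≤ n, |P.eval (y i)| ≤ M) (z : ℝ) (hz : |z| ≤ 1) :
    |P.eval z| ≤ M * ((4 / d) ^ n / n.factorial) := by
  have hM0 : 0 ≤ M := (abs_nonneg _).trans (hM 0 (by omega))
  have hinj : Set.InjOn y (Finset.range (n + 1)) := by
    intro i hi k hk hik
    have hi' : i ≤ n := by simpa [Nat.lt_succ_iff] using hi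
    have hk' : k ≤ n := by simpa [Nat.lt_succ_iff] using hk
    have := hsep i hi' k hk'
    rw [hik] at this
    simp only [sub_self, abs_zero] at this
    have h0 : |(i:ℝ) - k| = 0 := by
      by_contra hne
      have : 0 < |(i:ℝ) - k| := lt_of_le_of_ne (abs_nonneg _) (Ne.symm hne)
      have := mul_pos hd this
      linarith
    have := sub_eq_zero.1 (abs_eq_zero.1 h0)
    exact_mod_cast this
  have heq := Lagrange.eq_interpolate (f := P) hinj (by simpa using hP)
  rw [heq, Lagrange.interpolate_apply, Polynomial.eval_finsetSum]
  have hterm : ∀ i ∈ Finset.range (n + 1),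
      |Polynomial.eval z (Polynomial.C (P.eval (y i)) * Lagrange.basis (Finset.range (n + 1)) y i)|
      ≤ M * ((2 / d) ^ n / n.factorial * n.choose i) := by
    intro i hi
    have hi' : i ≤ n := by simpa [Nat.lt_succ_iff] using hi
    rw [Polynomial.eval_mul, Polynomial.eval_C, abs_mul]
    refine mul_le_mul (hM i hi') ?_ (abs_nonneg _) hM0
    rw [Lagrange.basis, Polynomial.eval_prod, Finset.abs_prod]
    have hb : ∀ k ∈ (Finset.range (n + 1)).erase i,
        |Polynomial.eval z (Lagrange.basisDivisor (y i) (y k))| ≤ (2 / d) * |(i:ℝ) - k|⁻¹ := by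
      intro k hk
      obtain ⟨hki, hk⟩ := Finset.mem_erase.1 hk
      have hk' : k ≤ n := by simpa [Nat.lt_succ_iff] using hk
      have hpos : 0 < |(i:ℝ) - k| := by
        rw [abs_pos, sub_ne_zero]; exact_mod_cast hki.symm
      have h1 := hsep i hi' k hk'
      simp only [Lagrange.basisDivisor, Polynomial.eval_mul, Polynomial.eval_C,
        Polynomial.eval_sub, Polynomial.eval_X, abs_mul, abs_inv]
      have h2 : |z - y k| ≤ 2 := by
        have := abs_sub z (y k); have := hy1 k hk'; linarith
      calc |y i - y k|⁻¹ * |z - y k| ≤ (d * |(i:ℝ) - k|)⁻¹ * 2 := by gcongr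
        _ = _ := by rw [mul_inv]; ring
    refine (Finset.prod_le_prod (fun _ _ => abs_nonneg _) hb).trans (le_of_eq ?_)
    rw [Finset.prod_mul_distrib, Finset.prod_inv_distrib, Finset.prod_const,
      Finset.card_erase_of_mem hi, Finset.card_range]
    obtain ⟨m, rfl⟩ := Nat.exists_eq_add_of_le hi'
    rw [prod_abs_sub, Nat.add_sub_cancel, Nat.choose_symm_add, Nat.add_choose,
      Nat.cast_div (Nat.factorial_mul_factorial_dvd_factorial_add i m) (by positivity)]
    push_cast
    have := Nat.factorial_pos (i + m)
    field_simp
  refine (Finset.abs_sum_le_sum_abs _ _).trans ((Finset.sum_le_sum hterm).trans (le_of_eq ?_))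
  rw [← Finset.mul_sum, ← Finset.mul_sum]
  have : (∑ i ∈ Finset.range (n + 1), (n.choose i : ℝ)) = 2 ^ n := by
    exact_mod_cast Nat.sum_range_choose n
  rw [this, div_mul_eq_mul_div, ← mul_pow]
  congr 3; ring

lemma sin_lower (R x : ℝ) (h1 : 3 * R ≤ x) (h2 : x ≤ 1 - 3 * R) (hR : 0 < R) :
    6 * R ≤ sin (π * x) := by
  have hpi := Real.pi_pos
  rcases le_total x (1/2) with h | h
  · have := Real.mul_le_sin (x := π * x) (by have : 0 ≤ x := by linarith
                                             positivity) (by nlinarith)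
    have e : 2 / π * (π * x) = 2 * x := by field_simp
    linarith
  · have := Real.mul_le_sin (x := π * (1 - x)) (by have : 0 ≤ 1 - x := by linarith
                                                   positivity) (by nlinarith)
    have e : 2 / π * (π * (1 - x)) = 2 * (1 - x) := by field_simp
    have e2 : sin (π * (1 - x)) = sin (π * x) := by
      rw [show π * (1 - x) = π - π * x by ring, Real.sin_pi_sub]
    linarith

lemma cos_sep (R x y : ℝ) (hR : 0 < R) (hx1 : 3 * R ≤ x) (hx2 : x ≤ 1 - 3 * R)
    (hy1 : 3 * R ≤ y) (hy2 : y ≤ 1 - 3 * R) (hxy : x ≤ y) :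
    12 * R * (y - x) ≤ |cos (π * x) - cos (π * y)| := by
  have hpi := Real.pi_pos
  have h1 := sin_lower R ((x + y) / 2) (by linarith) (by linarith) hR
  have h2 := Real.mul_le_sin (x := π * ((y - x) / 2))
    (by have : 0 ≤ (y - x) / 2 := by linarith
        positivity) (by nlinarith)
  have e : 2 / π * (π * ((y - x) / 2)) = y - x := by field_simp
  rw [e] at h2
  rw [Real.cos_sub_cos, show (π * x + π * y) / 2 = π * ((x + y) / 2) by ring,
    show (π * x - π * y) / 2 = -(π * ((y - x) / 2)) by ring, Real.sin_neg]
  refine le_trans ?_ (le_abs_self _)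
  have : 6 * R * (y - x) ≤ sin (π * ((x + y) / 2)) * sin (π * ((y - x) / 2)) :=
    mul_le_mul h1 h2 (by linarith) (by linarith)
  linarith

/-- pointwise bound for trigonometric-type functions -/
lemma sup_bound (R g : ℝ) (hR : 0 < R) (hg : 0 < g) (n : ℕ) (P : Polynomial ℝ)
    (hP : P.degree < ((n + 1 : ℕ) : WithBot ℕ)) (F : Set ℝ)
    (hF : F ⊆ Set.Icc (3 * R) (1 - 3 * R)) (hFg : ENNReal.ofReal (g / 2) < volume F)
    (M : ℝ) (hM : ∀ x ∈ F, |P.eval (cos (π * x)) * sin (π * x)| ≤ M) (z : ℝ) :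
    |P.eval (cos (π * z)) * sin (π * z)|
      ≤ M / (6 * R) * ((8 / (3 * R * g)) ^ n * exp (n + 1)) := by
  set h : ℝ := g / (4 * (n + 1)) with hh
  have hn : (0:ℝ) < n + 1 := by positivity
  have hhpos : 0 < h := by positivity
  have hb : BddBelow F := ⟨3 * R, fun x hx => (hF hx).1⟩
  obtain ⟨x, hx1, hx2⟩ := sep_points h hhpos n F hb (by
    refine lt_of_le_of_lt (ENNReal.ofReal_le_ofReal ?_) hFg
    rw [hh, show (n:ℝ) * (2 * (g / (4 * (n + 1)))) = (g / 2) * (n / (n + 1)) by field_simp; norm_num]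
    have : (n:ℝ) / (n + 1) ≤ 1 := by rw [div_le_one hn]; linarith
    nlinarith)
  have hx3 := sep_points' h n x hx2
  have hsep0 : ∀ i ≤ n, ∀ k ≤ n, i ≤ k →
      12 * R * h * |(i:ℝ) - k| ≤ |cos (π * x i) - cos (π * x k)| := by
    intro i hi k hk hik
    obtain ⟨m, rfl⟩ := Nat.exists_eq_add_of_le hik
    have h1 := hx3 m i hk
    have h0 : 0 ≤ h * m := by positivity
    have h2 := cos_sep R (x i) (x (i + m)) hR (hF (hx1 i hi)).1 (hF (hx1 i hi)).2
      (hF (hx1 _ hk)).1 (hF (hx1 _ hk)).2 (by linarith)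
    refine le_trans ?_ h2
    have : |(i:ℝ) - ((i + m : ℕ) : ℝ)| = m := by
      rw [abs_sub_comm]; push_cast; simp
    rw [this, mul_assoc]
    gcongr
  have hsep : ∀ i ≤ n, ∀ k ≤ n,
      12 * R * h * |(i:ℝ) - k| ≤ |cos (π * x i) - cos (π * x k)| := by
    intro i hi k hk
    rcases le_total i k with hik | hik
    · exact hsep0 i hi k hk hik
    · rw [abs_sub_comm (i:ℝ), abs_sub_comm (cos _)]
      exact hsep0 k hk i hi hik
  have key := remez_aux n P hP (fun i => cos (π * x i)) (12 * R * h) (M / (6 * R)) (by positivity)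
    (fun i _ => Real.abs_cos_le_one _) hsep (by
      intro i hi
      have h1 := hM _ (hx1 i hi)
      have h2 := sin_lower R (x i) (hF (hx1 i hi)).1 (hF (hx1 i hi)).2 hR
      rw [le_div_iff₀ (by positivity)]
      rw [abs_mul, abs_of_pos (a := sin _) (by linarith)] at h1
      refine le_trans ?_ h1
      gcongr) (cos (π * z)) (Real.abs_cos_le_one _)
  have hM0 : 0 ≤ M := (abs_nonneg _).trans (hM _ (hx1 0 (by omega)))
  rw [abs_mul]
  refine (mul_le_of_le_one_right (abs_nonneg _) (Real.abs_sin_le_one _)).trans (key.trans ?_)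
  have e : 4 / (12 * R * h) = 4 / (3 * R * g) * (n + 1) := by
    rw [hh]; field_simp; norm_num
  have h3 := Real.pow_div_factorial_le_exp (x := (n:ℝ) + 1) hn.le n
  rw [e, mul_pow, mul_div_assoc]
  gcongr
  norm_num

lemma exists_poly (l : ℝ) (hl : 0 < l) (a : ℕ → ℝ) (n : ℕ) (hn : n = ⌊l ^ ((1:ℝ)/4)⌋₊) :
    ∃ P : Polynomial ℝ, P.degree < ((n + 1 : ℕ) : WithBot ℕ) ∧ ∀ x : ℝ,
      (∑' j : ℕ, if 1 ≤ j ∧ (j : ℝ) ^ 4 * π ^ 4 ≤ l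
            then a j * Real.sin (j * π * x) else 0) = P.eval (cos (π * x)) * sin (π * x) := by
  classical
  refine ⟨∑ j ∈ Finset.range (n + 1), if 1 ≤ j ∧ (j : ℝ) ^ 4 * π ^ 4 ≤ l
    then Polynomial.C (a j) * Polynomial.Chebyshev.U ℝ ((j:ℤ) - 1) else 0, ?_, ?_⟩
  · refine lt_of_le_of_lt (Polynomial.degree_sum_le _ _) ?_
    rw [Finset.sup_lt_iff (WithBot.bot_lt_coe _)]
    intro j hj
    split_ifs with h
    · have hj := Finset.mem_range.1 hj
      obtain ⟨m, rfl⟩ := Nat.exists_eq_add_of_le h.1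
      have e : (((1 + m : ℕ) : ℤ) - 1) = (m : ℤ) := by push_cast; ring
      rw [e]
      rw [← Polynomial.smul_eq_C_mul]
      refine lt_of_le_of_lt (Polynomial.degree_smul_le _ _) ?_
      rw [Polynomial.Chebyshev.degree_U_natCast]
      exact_mod_cast (by omega : m < n + 1)
    · rw [Polynomial.degree_zero]; exact WithBot.bot_lt_coe _
  · intro x
    rw [tsum_eq_sum (s := Finset.range (n + 1)), Polynomial.eval_finsetSum, Finset.sum_mul]
    · refine Finset.sum_congr rfl fun j _ => ?_
      split_ifs with h
      · rw [Polynomial.eval_mul, Polynomial.eval_C, mul_assoc (a j), Polynomial.Chebyshev.U_real_cos]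
        congr 2; push_cast; ring
      · simp
    · intro j hj
      rw [if_neg]
      rintro ⟨h1, h2⟩
      apply hj
      rw [Finset.mem_range, Nat.lt_succ_iff, hn]
      apply Nat.le_floor
      have h3 : ((j:ℝ)) ^ 4 ≤ l := by
        refine le_trans ?_ h2
        have : (1:ℝ) ≤ π ^ 4 := one_le_pow₀ (by linarith [Real.pi_gt_three])
        have : 0 ≤ (j:ℝ) ^ 4 := by positivity
        nlinarith
      have h4 : (((j:ℝ)) ^ 4) ^ ((1:ℝ)/4) = j := by
        rw [← Real.rpow_natCast, ← Real.rpow_mul (by positivity)]; norm_num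
      rw [← h4]
      exact Real.rpow_le_rpow (by positivity) h3 (by norm_num)

theorem stmt_11 (x₀ R : ℝ) (hx₀ : x₀ ∈ Set.Ioo (0:ℝ) 1) (hR : R ∈ Set.Ioc (0:ℝ) 1)
    (hball : Set.Ioo (x₀ - 4 * R) (x₀ + 4 * R) ⊆ Set.Ioo (0:ℝ) 1)
    (G : Set ℝ) (hG : MeasurableSet G) (hGsub : G ⊆ Set.Ioo (x₀ - R) (x₀ + R))
    (hGpos : 0 < volume G) :
    ∃ C > 0, ∀ l > 0, ∀ a : ℕ → ℝ, (Function.support a).Finite →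
      (∫ x in Set.Ioo (0:ℝ) 1,
          (∑' j : ℕ, if 1 ≤ j ∧ (j : ℝ) ^ 4 * π ^ 4 ≤ l
            then a j * Real.sin (j * π * x) else 0) ^ 2) ^ ((1:ℝ)/2) ≤
        C * Real.exp (C * l ^ ((1:ℝ)/4)) *
          ∫ x in G,
            |∑' j : ℕ, if 1 ≤ j ∧ (j : ℝ) ^ 4 * π ^ 4 ≤ l
              then a j * Real.sin (j * π * x) else 0| := by
  have hR0 : 0 < R := hR.1
  rw [Set.Ioo_subset_Ioo_iff (by linarith)] at hball
  have hGI : G ⊆ Set.Icc (3 * R) (1 - 3 * R) := fun x hx =>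
    ⟨by linarith [(hGsub hx).1], by linarith [(hGsub hx).2]⟩
  have hGfin : volume G ≠ ⊤ :=
    ne_top_of_le_ne_top (by simp) (measure_mono hGI)
  set g : ℝ := volume.real G with hgdef
  have hg : 0 < g := ENNReal.toReal_pos hGpos.ne' hGfin
  set A : ℝ := max 1 (8 / (3 * R * g)) with hA
  have hA1 : 1 ≤ A := le_max_left _ _
  have hlogA : 0 ≤ log A := Real.log_nonneg hA1
  set C : ℝ := max (2 / g / (6 * R) * exp 1) (log A + 1) with hC
  have hC0 : 0 < C := lt_of_lt_of_le (by linarith) (le_max_right _ _)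
  refine ⟨C, hC0, fun l hl a _ => ?_⟩
  obtain ⟨P, hdeg, hPf⟩ := exists_poly l hl a _ rfl
  simp only [hPf]
  set n := ⌊l ^ ((1:ℝ)/4)⌋₊ with hn
  set f : ℝ → ℝ := fun x => P.eval (cos (π * x)) * sin (π * x) with hf
  have hfc : Continuous f := by
    have := P.continuous
    fun_prop
  set I : ℝ := ∫ x in G, |f x| with hI
  have hI0 : 0 ≤ I := integral_nonneg fun _ => abs_nonneg _
  have hint : IntegrableOn (fun x => |f x|) G :=
    (hfc.abs.continuousOn.integrableOn_compact isCompact_Icc).mono_set hGI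
  set K : ℝ := (8 / (3 * R * g)) ^ n * exp (n + 1) with hK
  have hK0 : 0 < K := by positivity
  have hbd : ∀ z, |f z| ≤ (2 / g * I) / (6 * R) * K := by
    intro z
    have hall : ∀ M > 2 / g * I, |f z| ≤ M / (6 * R) * K := by
      intro M hM
      have hM0 : 0 < M := lt_of_le_of_lt (by positivity) hM
      have hmk := mul_meas_ge_le_integral_of_nonneg (μ := volume.restrict G)
        (f := fun x => |f x|) (ae_of_all _ fun _ => abs_nonneg _) hint M
      have hms : MeasurableSet {x | M ≤ |f x|} := measurableSet_le measurable_const hfc.abs.measurable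
      refine sup_bound R g hR0 hg n P hdeg (G ∩ {x | |f x| < M})
        (Set.inter_subset_left.trans hGI) ?_ M (fun x hx => le_of_lt hx.2) z
      have hadd := measureReal_inter_add_sdiff (μ := volume) (s := G) hms (h := hGfin)
      have e1 : (volume.restrict G).real {x | M ≤ |f x|} = volume.real (G ∩ {x | M ≤ |f x|}) := by
        rw [measureReal_restrict_apply hms, Set.inter_comm]
      have e2 : G \ {x | M ≤ |f x|} = G ∩ {x | |f x| < M} := by
        ext x; simp
      rw [e1] at hmk
      rw [e2] at hadd
      have h3 : I < M * (g / 2) := by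
        have : 2 / g * I * (g / 2) = I := by field_simp
        nlinarith
      have h4 : volume.real (G ∩ {x | M ≤ |f x|}) < g / 2 :=
        lt_of_mul_lt_mul_left (hmk.trans_lt h3) hM0.le
      have h5 : g / 2 < volume.real (G ∩ {x | |f x| < M}) := by linarith
      rw [ENNReal.ofReal_lt_iff_lt_toReal (by positivity)
        (ne_top_of_le_ne_top hGfin (measure_mono Set.inter_subset_left))]
      exact h5
    have h6 : |f z| / (K / (6 * R)) ≤ 2 / g * I := by
      refine le_of_forall_gt_imp_ge_of_dense fun M hM => ?_
      rw [div_le_iff₀ (by positivity)]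
      refine (hall M hM).trans (le_of_eq (by ring))
    rw [div_le_iff₀ (by positivity)] at h6
    exact h6.trans (le_of_eq (by ring))
  set B : ℝ := (2 / g * I) / (6 * R) * K with hB
  have hB0 : 0 ≤ B := by positivity
  have hL2 : (∫ x in Set.Ioo (0:ℝ) 1, f x ^ 2) ≤ B ^ 2 := by
    have hi : IntegrableOn (fun x => f x ^ 2) (Set.Ioo (0:ℝ) 1) :=
      ((hfc.pow 2).continuousOn.integrableOn_compact isCompact_Icc).mono_set Set.Ioo_subset_Icc_self
    have : (∫ x in Set.Ioo (0:ℝ) 1, f x ^ 2) ≤ ∫ x in Set.Ioo (0:ℝ) 1, B ^ 2 := by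
      refine integral_mono hi (by simp) fun x => ?_
      have := hbd x
      exact sq_le_sq' (by linarith [neg_abs_le (f x)]) (by linarith [le_abs_self (f x)])
    simpa using this
  have h7 : (∫ x in Set.Ioo (0:ℝ) 1, f x ^ 2) ^ ((1:ℝ)/2) ≤ B := by
    rw [← Real.sqrt_eq_rpow]
    exact Real.sqrt_le_iff.2 ⟨hB0, hL2⟩
  refine h7.trans ?_
  have hnl : (n:ℝ) ≤ l ^ ((1:ℝ)/4) := Nat.floor_le (by positivity)
  have hKle : K ≤ exp 1 * exp (C * l ^ ((1:ℝ)/4)) := by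
    have h8 : (8 / (3 * R * g)) ^ n ≤ exp (n * log A) := by
      rw [mul_comm (n:ℝ), Real.exp_mul, Real.exp_log (by linarith), Real.rpow_natCast]
      exact pow_le_pow_left₀ (by positivity) (le_max_right _ _) n
    calc K ≤ exp (n * log A) * exp (n + 1) := by rw [hK]; gcongr
      _ = exp 1 * exp ((log A + 1) * n) := by
        rw [← Real.exp_add, ← Real.exp_add]; congr 1; ring
      _ ≤ _ := by
        gcongr
        exact le_max_right _ _
  calc B ≤ (2 / g * I) / (6 * R) * (exp 1 * exp (C * l ^ ((1:ℝ)/4))) := by rw [hB]; gcongr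
    _ = (2 / g / (6 * R) * exp 1) * exp (C * l ^ ((1:ℝ)/4)) * I := by ring
    _ ≤ _ := by
      gcongr
      exact le_max_left _ _
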